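/- arXiv:1309.6931 — 3 statements merged into one kernel-verified Lean document; each statement's English description precedes it below -/
import Mathlib

section
/- The Alpert refinement coefficients solve a generalized eigenvalue problem in the column index: for all natural numbers i, j with 1 ≤ j ≤ i (using the convention c_{a,b} = 0 whenever b > a), (j(j+1)(j+2)/sqrt((2j+3)(2j+1)))·c_{i,j+1} + 3j(j+1)·c_{i,j} + ((j−1)j(j+1)/sqrt((2j+1)(2j−1)))·c_{i,j−1} = i(i+1)·[ (j/sqrt((2j+3)(2j+1)))·c_{i,j+1} + c_{i,j} + ((j+1)/sqrt((2j+1)(2j−1)))·c_{i,j−1} ]. -/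
/-!
Write `P_n` for the Legendre polynomials and `I_j = ∫_0^1 P_i(t) P_j(2t-1) dt`, so that
`c_{i,j} = √(2i+1) √(2j+1) I_j` (`alpertC_eq`). Clearing the square roots, the claim becomes
`j(j+1)(j+2) I_{j+1} + 3j(j+1)(2j+1) I_j + (j-1)j(j+1) I_{j-1} =
i(i+1) (j I_{j+1} + (2j+1) I_j + (j+1) I_{j-1})` (`rawC_relation`).

Put `Q = j P_{j+1} + (2j+1) P_j + (j+1) P_{j-1}`. The classical recurrences for `P_n`, derived from
Rodrigues' formula, give `Q(-1) = 0` and `Q' = (2j+1) (1+x) P_j'`, so `Q` has a double zero at `-1`;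
they also give that `-((1-x)(3+x) Q')'` is the combination of `P_{j+1}, P_j, P_{j-1}` on the
left-hand side. Under `x = 2t-1`, the operator `f ↦ ((1-x)(3+x) f')'` is `f ↦ ((1-t²) f')'`, for
which `P_i` is an eigenfunction with eigenvalue `-i(i+1)`. Hence the relation is Green's identity on
`[0,1]`: the boundary terms vanish at `t = 1` because of the weight, and at `t = 0` because of the
double zero of `Q`.
-/

open MeasureTheory

/-- The orthonormal Legendre polynomial of degree `n` on `[-1,1]`,
`p̂_n(t) = sqrt((2n+1)/2) · (1/(2^n n!)) dⁿ/dtⁿ (t²-1)ⁿ`. -/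
noncomputable def legendreHat (n : ℕ) : ℝ → ℝ := fun t =>
  Real.sqrt ((2 * n + 1) / 2) * ((1 : ℝ) / (2 ^ n * n.factorial)) *
    iteratedDeriv n (fun s => (s ^ 2 - 1) ^ n) t

/-- The Alpert refinement coefficients `c_{i,j} = 2∫_0^1 p̂_i(t) p̂_j(2t-1) dt`. -/
noncomputable def alpertC (i j : ℕ) : ℝ :=
  2 * ∫ t in (0:ℝ)..1, legendreHat i t * legendreHat j (2 * t - 1)

open Polynomial in
/-- The Legendre polynomial `P_n` given by Rodrigues' formula, as a formal polynomial. -/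
noncomputable def legendreP (n : ℕ) : ℝ[X] :=
  C ((1 : ℝ) / (2 ^ n * n.factorial)) * derivative^[n] ((X ^ 2 - 1) ^ n)

open Polynomial in
lemma iterate_deriv_X_mul (p : ℝ[X]) (k : ℕ) :
    derivative^[k] (X * p) = X * derivative^[k] p + (k : ℝ[X]) * derivative^[k - 1] p := by
  rw [mul_comm, iterate_derivative_mul_X, nsmul_eq_mul, mul_comm X]

open Polynomial in
/-- The two facts about the Rodrigues polynomials `R_n = Dⁿ (X² - 1)ⁿ` from which everything else
follows; they come from comparing `u_{n+1}' = 2(n+1) X u_n` with `u_{n+1} = (X² - 1) u_n`,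
where `u_n = (X² - 1)ⁿ`. The second is Legendre's differential equation. -/
lemma rodrigues_facts (n : ℕ) :
    derivative^[n + 1] ((X ^ 2 - 1 : ℝ[X]) ^ (n + 1)) =
        2 * (n + 1 : ℝ[X]) * X * derivative^[n] ((X ^ 2 - 1) ^ n) +
          2 * (X ^ 2 - 1) * derivative (derivative^[n] ((X ^ 2 - 1) ^ n)) ∧
      derivative ((X ^ 2 - 1) * derivative (derivative^[n] ((X ^ 2 - 1 : ℝ[X]) ^ n))) =
        (n : ℝ[X]) * (n + 1 : ℝ[X]) * derivative^[n] ((X ^ 2 - 1) ^ n) := by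
  set u : ℝ[X] := (X ^ 2 - 1) ^ n with hu
  have h1 : derivative^[n + 1] ((X ^ 2 - 1 : ℝ[X]) ^ (n + 1)) =
      2 * (n + 1 : ℝ[X]) * (X * derivative^[n] u + (n : ℝ[X]) * derivative^[n - 1] u) := by
    have hd : derivative ((X ^ 2 - 1 : ℝ[X]) ^ (n + 1)) = ((2 * (n + 1) : ℕ) : ℝ[X]) * (X * u) := by
      rw [derivative_pow_succ]
      simp [hu]
      ring
    rw [Function.iterate_succ_apply, hd, iterate_derivative_natCast_mul, iterate_deriv_X_mul]
    push_cast
    ring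
  have h2 : derivative^[n + 1] ((X ^ 2 - 1 : ℝ[X]) ^ (n + 1)) =
      (X ^ 2 - 1) * derivative (derivative^[n] u) + 2 * (n + 1 : ℝ[X]) * X * derivative^[n] u +
        (n + 1 : ℝ[X]) * ((n : ℝ[X]) * derivative^[n - 1] u) := by
    have : (X ^ 2 - 1 : ℝ[X]) ^ (n + 1) = X * (X * u) - u := by rw [hu]; ring
    rw [this, iterate_derivative_sub, iterate_deriv_X_mul, iterate_deriv_X_mul,
      Nat.add_sub_cancel, iterate_deriv_X_mul, Function.iterate_succ_apply']
    push_cast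
    ring
  have h3 : (X ^ 2 - 1) * derivative (derivative^[n] u) =
      (n + 1 : ℝ[X]) * ((n : ℝ[X]) * derivative^[n - 1] u) := by
    linear_combination h1 - h2
  refine ⟨by linear_combination 2 * h2 - h1, ?_⟩
  rw [h3]
  rcases n with _ | k
  · simp only [Nat.cast_zero, zero_mul, mul_zero, derivative_zero]
  · rw [Nat.add_sub_cancel, Function.iterate_succ_apply']
    simp only [derivative_mul, derivative_add, derivative_natCast, derivative_one]
    push_cast
    ring

open Polynomial in
/-- Legendre's differential equation. -/
lemma legendreP_ode (n : ℕ) :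
    derivative ((X ^ 2 - 1) * derivative (legendreP n)) =
      (n : ℝ[X]) * (n + 1 : ℝ[X]) * legendreP n := by
  have h := (rodrigues_facts n).2
  rw [legendreP, derivative_C_mul, mul_left_comm, derivative_C_mul, h]
  ring

open Polynomial in
lemma legendreP_succ (n : ℕ) :
    (n + 1 : ℝ[X]) * legendreP (n + 1) =
      (n + 1 : ℝ[X]) * X * legendreP n + (X ^ 2 - 1) * derivative (legendreP n) := by
  have h := (rodrigues_facts n).1
  have hc : C ((1 : ℝ) / (2 ^ n * n.factorial)) =
      2 * (n + 1 : ℝ[X]) * C ((1 : ℝ) / (2 ^ (n + 1) * (n + 1).factorial)) := by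
    have : (2 * (n + 1 : ℝ[X]) : ℝ[X]) = C (2 * (n + 1) : ℝ) := by simp [← C_ofNat]
    rw [this, ← C_mul]
    congr 1
    rw [Nat.factorial_succ]
    push_cast
    field_simp
    ring
  rw [legendreP, legendreP, derivative_C_mul, h, hc]
  ring

open Polynomial in
lemma natCast_succ_ne_zero (n : ℕ) : (n + 1 : ℝ[X]) ≠ 0 := by
  exact_mod_cast Nat.succ_ne_zero n

open Polynomial in
lemma derivative_legendreP_succ (n : ℕ) :
    derivative (legendreP (n + 1)) = (n + 1 : ℝ[X]) * legendreP n + X * derivative (legendreP n) := by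
  have h := congrArg derivative (legendreP_succ n)
  rw [derivative_add, legendreP_ode] at h
  simp only [derivative_mul, derivative_add, derivative_natCast, derivative_one,
    derivative_X] at h
  apply mul_left_cancel₀ (natCast_succ_ne_zero n)
  linear_combination h

open Polynomial in
lemma legendreP_pred (n : ℕ) :
    (X ^ 2 - 1) * derivative (legendreP (n + 1)) =
      (n + 1 : ℝ[X]) * (X * legendreP (n + 1) - legendreP n) := by
  rw [derivative_legendreP_succ]
  linear_combination -X * legendreP_succ n

open Polynomial in
/-- With `j = m + 1`, the combination `j P_{j+1} + (2j+1) P_j + (j+1) P_{j-1}` against which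
`P_i` is integrated on the right-hand side of the eigenvalue relation. -/
noncomputable def colComb (m : ℕ) : ℝ[X] :=
  (m + 1 : ℝ[X]) * legendreP (m + 2) + (2 * m + 3 : ℝ[X]) * legendreP (m + 1) +
    (m + 2 : ℝ[X]) * legendreP m

open Polynomial in
lemma colComb_eq (m : ℕ) :
    (m + 1 : ℝ[X]) * (m + 2 : ℝ[X]) * colComb m = (2 * m + 3 : ℝ[X]) *
      ((m + 1 : ℝ[X]) * (m + 2 : ℝ[X]) * (1 + X) * legendreP (m + 1) +
        (1 - X ^ 2) * derivative (legendreP (m + 1))) := by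
  have h1 := legendreP_succ (m + 1)
  have h2 := legendreP_pred m
  push_cast at h1
  rw [colComb]
  linear_combination (m + 1 : ℝ[X]) ^ 2 * h1 + (m + 2 : ℝ[X]) ^ 2 * h2

open Polynomial in
lemma derivative_colComb (m : ℕ) :
    derivative (colComb m) = (2 * m + 3 : ℝ[X]) * (1 + X) * derivative (legendreP (m + 1)) := by
  have h := congrArg derivative (colComb_eq m)
  have ho := legendreP_ode (m + 1)
  have e : (1 - X ^ 2 : ℝ[X]) * derivative (legendreP (m + 1)) =
    -((X ^ 2 - 1) * derivative (legendreP (m + 1))) := by ring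
  rw [e] at h
  have e1 : (2 * m + 3 : ℝ[X]) = ((2 * m + 3 : ℕ) : ℝ[X]) := by push_cast; ring
  have e2 : (m + 1 : ℝ[X]) * (m + 2 : ℝ[X]) = (((m + 1) * (m + 2) : ℕ) : ℝ[X]) := by push_cast; ring
  rw [e1, e2, derivative_natCast_mul, derivative_natCast_mul, derivative_add, mul_assoc,
    derivative_natCast_mul, derivative_neg, ho] at h
  simp only [derivative_mul, derivative_add, derivative_one, derivative_X] at h
  push_cast at h
  apply mul_left_cancel₀ (mul_ne_zero (natCast_succ_ne_zero m) (natCast_succ_ne_zero (m + 1)))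
  push_cast
  linear_combination h

open Polynomial in
/-- The combination of `P_{j+1}, P_j, P_{j-1}` on the left-hand side of the eigenvalue relation, for
`j = m + 1`, is minus the Legendre operator of the
variable `t = (1 + X) / 2` applied to `colComb m`, since `4 (1 - t²) = (1 - X) (3 + X)`. -/
lemma derivative_weight_colComb (m : ℕ) :
    derivative ((1 - X) * (3 + X) * derivative (colComb m)) =
      -((m + 1 : ℝ[X]) * (m + 2 : ℝ[X]) * (m + 3 : ℝ[X]) * legendreP (m + 2) +
        3 * (m + 1 : ℝ[X]) * (m + 2 : ℝ[X]) * (2 * m + 3 : ℝ[X]) * legendreP (m + 1) +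
        (m : ℝ[X]) * (m + 1 : ℝ[X]) * (m + 2 : ℝ[X]) * legendreP m) := by
  have ho := legendreP_ode (m + 1)
  have h1 := legendreP_succ (m + 1)
  have h2 := legendreP_pred m
  have e : (1 - X) * (3 + X) * derivative (colComb m) = ((2 * m + 3 : ℕ) : ℝ[X]) *
      (-(3 + X) * ((X ^ 2 - 1) * derivative (legendreP (m + 1)))) := by
    rw [derivative_colComb]; push_cast; ring
  rw [e, derivative_natCast_mul, derivative_mul, ho]
  simp only [derivative_neg, derivative_add, derivative_X, derivative_ofNat]
  push_cast at h1 ⊢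
  linear_combination (m + 1 : ℝ[X]) * (m + 3 : ℝ[X]) * h1 + (m : ℝ[X]) * (m + 2 : ℝ[X]) * h2

open Polynomial in
lemma integral_derivative_eval (p : ℝ[X]) (a b : ℝ) :
    ∫ t in a..b, (derivative p).eval t = p.eval b - p.eval a :=
  intervalIntegral.integral_eq_sub_of_hasDerivAt (fun t _ => p.hasDerivAt t)
    ((derivative p).continuous.intervalIntegrable a b)

open Polynomial in
lemma iteratedDeriv_eval (p : ℝ[X]) (n : ℕ) (t : ℝ) :
    iteratedDeriv n (fun s => p.eval s) t = (derivative^[n] p).eval t := by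
  induction n generalizing t with
  | zero => simp
  | succ n ih =>
    rw [iteratedDeriv_succ, funext ih, Function.iterate_succ_apply', Polynomial.deriv]

open Polynomial in
lemma legendreHat_eq (n : ℕ) (t : ℝ) :
    legendreHat n t = √((2 * n + 1) / 2) * (legendreP n).eval t := by
  have h := iteratedDeriv_eval ((X ^ 2 - 1) ^ n) n t
  simp only [eval_pow, eval_sub, eval_X, eval_one] at h
  rw [legendreHat, legendreP, h, eval_mul, eval_C]
  ring

open Polynomial in
/-- The unnormalised coefficient `∫_0^1 P_i(t) P_j(2t-1) dt`. -/
noncomputable def rawC (i j : ℕ) : ℝ :=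
  ∫ t in (0 : ℝ)..1, (legendreP i).eval t * (legendreP j).eval (2 * t - 1)

lemma alpertC_eq (i j : ℕ) :
    alpertC i j = √(2 * i + 1) * √(2 * j + 1) * rawC i j := by
  have h2 : √(2 : ℝ) * √2 = 2 := Real.mul_self_sqrt (by norm_num)
  have hs : √((2 * i + 1 : ℝ) / 2) * √((2 * j + 1 : ℝ) / 2) * 2 =
      √(2 * i + 1) * √(2 * j + 1) := by
    rw [Real.sqrt_div (by positivity), Real.sqrt_div (by positivity)]
    field_simp
    linear_combination -h2
  rw [alpertC, rawC, ← hs, ← intervalIntegral.integral_const_mul,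
    ← intervalIntegral.integral_const_mul]
  congr 1
  funext t
  rw [legendreHat_eq, legendreHat_eq]
  ring

open Polynomial in
/-- The eigenvalue relation for the unnormalised coefficients: Green's identity for the
self-adjoint operator `f ↦ ((1 - t²) f')'` on `[0,1]`. The boundary terms vanish because
`1 - t²` vanishes at `t = 1`, and `colComb m` has a double zero at `-1`. -/
lemma rawC_relation (i m : ℕ) :
    (m + 1 : ℝ) * (m + 2) * (m + 3) * rawC i (m + 2) +
        3 * (m + 1) * (m + 2) * (2 * m + 3) * rawC i (m + 1) +
        m * (m + 1) * (m + 2) * rawC i m =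
      i * (i + 1) * ((m + 1) * rawC i (m + 2) + (2 * m + 3) * rawC i (m + 1) +
        (m + 2) * rawC i m) := by
  set W : ℝ[X] := legendreP i * ((1 - X ^ 2) * derivative ((colComb m).comp (2 * X - 1))) +
    (X ^ 2 - 1) * derivative (legendreP i) * (colComb m).comp (2 * X - 1) with hW
  have hd : derivative ((colComb m).comp (2 * X - 1)) =
      2 * (derivative (colComb m)).comp (2 * X - 1) := by
    rw [derivative_comp]; simp
  have hweight : 2 * ((1 - X ^ 2) * derivative ((colComb m).comp (2 * X - 1))) =
      ((1 - X) * (3 + X) * derivative (colComb m)).comp (2 * X - 1) := by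
    rw [hd]
    simp only [mul_comp, sub_comp, add_comp, one_comp, X_comp, ofNat_comp]
    ring
  have hop : derivative ((1 - X ^ 2) * derivative ((colComb m).comp (2 * X - 1))) =
      (derivative ((1 - X) * (3 + X) * derivative (colComb m))).comp (2 * X - 1) := by
    have h := congrArg derivative hweight
    rw [derivative_comp (p := (1 - X) * (3 + X) * _)] at h
    simp only [derivative_mul (f := 2), derivative_ofNat, derivative_sub, derivative_X,
      derivative_one] at h
    apply mul_left_cancel₀ (two_ne_zero : (2 : ℝ[X]) ≠ 0)
    linear_combination h
  have hW' : derivative W = legendreP i *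
      (derivative ((1 - X) * (3 + X) * derivative (colComb m))).comp (2 * X - 1) +
      (i : ℝ[X]) * (i + 1 : ℝ[X]) * legendreP i * (colComb m).comp (2 * X - 1) := by
    rw [hW, derivative_add, derivative_mul (f := legendreP i), hop,
      derivative_mul (g := (colComb m).comp _), legendreP_ode]
    ring
  have hc0 : (colComb m).eval (-1) = 0 := by
    have h := congrArg (eval (-1)) (colComb_eq m)
    have h0 : ((m : ℝ) + 1) * (m + 2) ≠ 0 := by positivity
    simpa [h0, -mul_eq_zero, mul_eq_zero_iff_left] using h
  have hW0 : W.eval 0 = 0 := by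
    simp [hW, hd, derivative_colComb, hc0]
  have hW1 : W.eval 1 = 0 := by simp [hW]
  have hint := integral_derivative_eval W 0 1
  rw [hW0, hW1, sub_self, hW', derivative_weight_colComb, colComb] at hint
  have hI : ∀ n, IntervalIntegrable
      (fun t : ℝ => (legendreP i).eval t * (legendreP n).eval (2 * t - 1)) volume 0 1 := fun n =>
    Continuous.intervalIntegrable (by fun_prop) _ _
  have hlin : ∀ a b c : ℝ, ∫ t in (0 : ℝ)..1,
      (a * ((legendreP i).eval t * (legendreP (m + 2)).eval (2 * t - 1)) +
        b * ((legendreP i).eval t * (legendreP (m + 1)).eval (2 * t - 1)) +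
        c * ((legendreP i).eval t * (legendreP m).eval (2 * t - 1))) =
      a * rawC i (m + 2) + b * rawC i (m + 1) + c * rawC i m := by
    intro a b c
    rw [intervalIntegral.integral_add (((hI _).const_mul _).add ((hI _).const_mul _))
      ((hI _).const_mul _), intervalIntegral.integral_add ((hI _).const_mul _)
      ((hI _).const_mul _)]
    simp only [intervalIntegral.integral_const_mul, rawC]
  have key := hlin (i * (i + 1) * (m + 1) - (m + 1) * (m + 2) * (m + 3))
    (i * (i + 1) * (2 * m + 3) - 3 * (m + 1) * (m + 2) * (2 * m + 3))
    (i * (i + 1) * (m + 2) - m * (m + 1) * (m + 2))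
  have hzero : (0 : ℝ) = (i * (i + 1) * (m + 1) - (m + 1) * (m + 2) * (m + 3)) * rawC i (m + 2) +
      (i * (i + 1) * (2 * m + 3) - 3 * (m + 1) * (m + 2) * (2 * m + 3)) * rawC i (m + 1) +
      (i * (i + 1) * (m + 2) - m * (m + 1) * (m + 2)) * rawC i m := by
    rw [← key]
    refine hint.symm.trans (intervalIntegral.integral_congr fun t _ => ?_)
    simp
    ring
  linear_combination hzero

theorem alpertC_gen_eigen_col (i j : ℕ) (hj : 1 ≤ j) (hij : j ≤ i) :
    (j : ℝ) * (j + 1) * (j + 2) / Real.sqrt ((2 * j + 3) * (2 * j + 1)) * alpertC i (j + 1) +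
      3 * j * (j + 1) * alpertC i j +
      ((j : ℝ) - 1) * j * (j + 1) / Real.sqrt ((2 * j + 1) * (2 * j - 1)) * alpertC i (j - 1) =
    (i : ℝ) * (i + 1) *
      ((j : ℝ) / Real.sqrt ((2 * j + 3) * (2 * j + 1)) * alpertC i (j + 1) +
        alpertC i j +
        ((j : ℝ) + 1) / Real.sqrt ((2 * j + 1) * (2 * j - 1)) * alpertC i (j - 1)) := by
  obtain ⟨m, rfl⟩ : ∃ m, j = m + 1 := ⟨j - 1, by omega⟩
  have h := rawC_relation i m
  rw [alpertC_eq, alpertC_eq, alpertC_eq, Nat.add_sub_cancel]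
  push_cast
  have e5 : (2 * ((m : ℝ) + 1) + 3) = 2 * m + 5 := by ring
  have e5' : (2 * ((m : ℝ) + 1 + 1) + 1) = 2 * m + 5 := by ring
  have e3 : (2 * ((m : ℝ) + 1) + 1) = 2 * m + 3 := by ring
  have e1 : (2 * ((m : ℝ) + 1) - 1) = 2 * m + 1 := by ring
  rw [e5, e5', e3, e1, Real.sqrt_mul (by positivity), Real.sqrt_mul (by positivity)]
  have p5 : 0 < √(2 * (m : ℝ) + 5) := Real.sqrt_pos.2 (by positivity)
  have p3 : 0 < √(2 * (m : ℝ) + 3) := Real.sqrt_pos.2 (by positivity)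
  have p1 : 0 < √(2 * (m : ℝ) + 1) := Real.sqrt_pos.2 (by positivity)
  have s3 : √(2 * (m : ℝ) + 3) ^ 2 = 2 * m + 3 := Real.sq_sqrt (by positivity)
  generalize √(2 * (m : ℝ) + 5) = a at *
  generalize √(2 * (m : ℝ) + 3) = b at *
  generalize √(2 * (m : ℝ) + 1) = c at *
  -- Cancelling the square roots leaves the unnormalised relation divided by `b = √(2j+1)`.
  have r1 : ∀ x y s : ℝ, x / (a * b) * (s * a * y) = s / b * (x * y) := by
    intro x y s; field_simp
  have r2 : ∀ x y s : ℝ, x / (b * c) * (s * c * y) = s / b * (x * y) := by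
    intro x y s; field_simp
  have r3 : ∀ y s : ℝ, s * b * y = s / b * ((2 * m + 3) * y) := by
    intro y s; rw [← s3]; field_simp
  rw [r1, r1, r2, r2, r3]
  linear_combination √(2 * (i : ℝ) + 1) / b * h
end

section
/- The Fourier transforms of the orthonormal Legendre polynomials satisfy the two-scale relation: for every natural number j and every real number a, ∫_{−1}^{1} e^{−i a t} p̂_j(t) dt = (1/2) · Σ_{k=0}^{j} c_{j,k} · ((−1)^{j+k} e^{i a/2} + e^{−i a/2}) · ∫_{−1}^{1} e^{−i a s/2} p̂_k(s) ds (integrals of complex-valued functions, i = imaginary unit). -/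
/-!
Write `p̂_n` for `legendreHat n`. The functions `p̂_0, …, p̂_j` form an orthonormal basis of the
polynomials of degree at most `j` on `[-1,1]`. This follows from Rodrigues' formula: integrating by
parts `n` times gives `∫ q p̂_n` explicitly in terms of the coefficient of degree `n` of `q`
whenever `deg q ≤ n` (`polyInt_mul_legPoly`).

Expanding `s ↦ p̂_j((s+1)/2)` in this basis, the coefficients are, after a change of variables,
exactly `c_{j,k}`; hence the refinement equation `p̂_j((s+1)/2) = ∑_{k ≤ j} c_{j,k} p̂_k(s)`
(`legendreHat_refinement`). Substituting it into the Fourier integral over `[0,1]` gives the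
`e^{-ia/2}` terms (`legendreHat_half_fourier`). The integral over `[-1,0]` is the one over `[0,1]`
with `a` replaced by `-a`, up to the sign `(-1)^j`; replacing `-a` by `a` again in the integrals of
`p̂_k` costs `(-1)^k`, which gives the `(-1)^{j+k} e^{ia/2}` terms.
-/

open MeasureTheory

open Polynomial

/-! ### Legendre polynomials as elements of `ℝ[X]` -/

/-- The normalizing constant `sqrt((2n+1)/2) / (2^n n!)` in Rodrigues' formula for `p̂_n`. -/
noncomputable def legConst (n : ℕ) : ℝ :=
  Real.sqrt ((2 * n + 1) / 2) * ((1 : ℝ) / (2 ^ n * n.factorial))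

/-- The orthonormal Legendre polynomial `p̂_n` as a formal polynomial, with the formal derivative
in Rodrigues' formula. -/
noncomputable def legPoly (n : ℕ) : ℝ[X] :=
  C (legConst n) * derivative^[n] ((X ^ 2 - 1) ^ n)

theorem iteratedDeriv_polynomial_eval (n : ℕ) (p : ℝ[X]) :
    iteratedDeriv n (fun t => p.eval t) = fun t => (derivative^[n] p).eval t := by
  induction n with
  | zero => simp
  | succ n ih =>
    rw [iteratedDeriv_succ, ih, Function.iterate_succ_apply']
    ext t
    simp

theorem legendreHat_eq_eval (n : ℕ) (t : ℝ) : legendreHat n t = (legPoly n).eval t := by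
  have h : (fun s : ℝ => (s ^ 2 - 1) ^ n) = fun s => ((X ^ 2 - 1 : ℝ[X]) ^ n).eval s := by
    ext s; simp
  rw [legendreHat, h, iteratedDeriv_polynomial_eval]
  simp [legPoly, legConst]

theorem legendreHat_neg (n : ℕ) (t : ℝ) : legendreHat n (-t) = (-1) ^ n * legendreHat n t := by
  have h := iteratedDeriv_comp_neg n (fun s : ℝ => (s ^ 2 - 1) ^ n) t
  simp only [neg_sq, smul_eq_mul] at h
  have h1 : ((-1 : ℝ) ^ n) * (-1) ^ n = 1 := by rw [← mul_pow]; simp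
  simp only [legendreHat, h]
  linear_combination (-(Real.sqrt ((2 * n + 1) / 2) * ((1 : ℝ) / (2 ^ n * n.factorial)) *
    iteratedDeriv n (fun s : ℝ => (s ^ 2 - 1) ^ n) (-t))) * h1

/-! ### Integration over `[-1,1]` and orthonormality -/

/-- The integral of a polynomial over `[-1,1]`. -/
noncomputable def polyInt (p : ℝ[X]) : ℝ := ∫ t in (-1 : ℝ)..1, p.eval t

theorem intervalIntegrable_eval (p : ℝ[X]) (a b : ℝ) :
    IntervalIntegrable (fun t => p.eval t) volume a b :=
  p.continuous.intervalIntegrable a b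

theorem polyInt_add (p q : ℝ[X]) : polyInt (p + q) = polyInt p + polyInt q := by
  simp only [polyInt, eval_add]
  exact intervalIntegral.integral_add (intervalIntegrable_eval _ _ _)
    (intervalIntegrable_eval _ _ _)

theorem polyInt_C_mul (c : ℝ) (p : ℝ[X]) : polyInt (C c * p) = c * polyInt p := by
  simp [polyInt]

theorem polyInt_sum (s : Finset ℕ) (f : ℕ → ℝ[X]) :
    polyInt (∑ k ∈ s, f k) = ∑ k ∈ s, polyInt (f k) := by
  simp only [polyInt, eval_finsetSum]
  exact intervalIntegral.integral_finsetSum fun k _ => intervalIntegrable_eval _ _ _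

theorem polyInt_derivative (p : ℝ[X]) : polyInt (derivative p) = p.eval 1 - p.eval (-1) :=
  intervalIntegral.integral_eq_sub_of_hasDerivAt (fun t _ => p.hasDerivAt t)
    (intervalIntegrable_eval _ _ _)

/-- The boundary terms in the integrations by parts vanish: `±1` are zeros of order `n` of
`(X² - 1)^n`, so fewer than `n` derivatives keep them as zeros. -/
theorem eval_iterate_derivative_eq_zero {n m : ℕ} (h : m < n) {x : ℝ} (hx : x ^ 2 = 1) :
    (derivative^[m] ((X ^ 2 - 1 : ℝ[X]) ^ n)).eval x = 0 := by
  have hd : (X - C x) ^ n ∣ (X ^ 2 - 1 : ℝ[X]) ^ n := by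
    refine pow_dvd_pow_of_dvd (dvd_iff_isRoot.2 ?_) n
    simp [hx]
  have h1 : (X - C x) ∣ derivative^[m] ((X ^ 2 - 1 : ℝ[X]) ^ n) :=
    (dvd_pow_self _ (by omega)).trans (pow_sub_dvd_iterate_derivative_of_pow_dvd m hd)
  exact dvd_iff_isRoot.1 h1

/-- Repeated integration by parts against `(X² - 1)^n`. -/
theorem polyInt_mul_iterate_derivative (n : ℕ) (k : ℕ) (hk : k ≤ n) (q : ℝ[X]) :
    polyInt (q * derivative^[k] ((X ^ 2 - 1) ^ n)) =
      (-1) ^ k * polyInt (derivative^[k] q * (X ^ 2 - 1) ^ n) := by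
  induction k generalizing q with
  | zero => simp
  | succ k ih =>
    have h := polyInt_derivative (q * derivative^[k] ((X ^ 2 - 1) ^ n))
    rw [eval_mul, eval_mul, eval_iterate_derivative_eq_zero (by omega) (by norm_num),
      eval_iterate_derivative_eq_zero (by omega) (by norm_num), derivative_mul, polyInt_add,
      ih (by omega), ← Function.iterate_succ_apply' derivative,
      ← Function.iterate_succ_apply derivative] at h
    linear_combination h

/-- The value `∫ (t² - 1)^n = (-1)^n 2^(2n+1) (n!)² / (2n+1)!`. The recursion in `n` comes from
integrating the derivative of `X (X² - 1)^(n+1)`, which vanishes at `±1`. -/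
theorem polyInt_pow (n : ℕ) :
    polyInt ((X ^ 2 - 1) ^ n) * (2 * n + 1).factorial =
      (-1) ^ n * 2 ^ (2 * n + 1) * (n.factorial : ℝ) ^ 2 := by
  induction n with
  | zero => norm_num [polyInt]
  | succ n ih =>
    have h := polyInt_derivative (X * (X ^ 2 - 1) ^ (n + 1))
    have hd : derivative (X * (X ^ 2 - 1 : ℝ[X]) ^ (n + 1)) =
        C (2 * n + 3 : ℝ) * (X ^ 2 - 1) ^ (n + 1) + C (2 * (n + 1) : ℝ) * (X ^ 2 - 1) ^ n := by
      have h2 : (C 2 : ℝ[X]) = 2 := rfl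
      have h3 : (C 3 : ℝ[X]) = 3 := rfl
      simp [derivative_pow, h2, h3]
      ring
    rw [hd, polyInt_add, polyInt_C_mul, polyInt_C_mul] at h
    simp at h
    rw [show 2 * (n + 1) + 1 = (2 * n + 1) + 1 + 1 by ring, Nat.factorial_succ,
      Nat.factorial_succ (2 * n + 1), Nat.factorial_succ n]
    push_cast
    linear_combination ((2 * n + 1).factorial * (2 * n + 2 : ℝ)) * h -
      (2 * (n + 1) * (2 * n + 2)) * ih

theorem polyInt_pow_ne_zero (n : ℕ) : polyInt ((X ^ 2 - 1) ^ n) ≠ 0 := by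
  intro h
  have h1 := polyInt_pow n
  rw [h, zero_mul, eq_comm] at h1
  have : (n.factorial : ℝ) ≠ 0 := by positivity
  simp [this] at h1

/-- Against a polynomial of degree at most `n`, `p̂_n` only sees the coefficient of degree `n`.
Orthogonality, normalization and completeness all follow from this formula. -/
theorem polyInt_mul_legPoly (n : ℕ) (q : ℝ[X]) (hq : q.natDegree ≤ n) :
    polyInt (q * legPoly n) =
      legConst n * (-1) ^ n * n.factorial * q.coeff n * polyInt ((X ^ 2 - 1) ^ n) := by
  have hD : derivative^[n] q = C (n.factorial * q.coeff n) := by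
    rw [eq_C_of_natDegree_le_zero ((natDegree_iterate_derivative q n).trans (by omega)),
      coeff_iterate_derivative]
    simp [Nat.descFactorial_self]
  rw [legPoly, mul_left_comm, polyInt_C_mul, polyInt_mul_iterate_derivative n n le_rfl, hD,
    polyInt_C_mul]
  ring

theorem X_sq_sub_one_pow_monic (n : ℕ) : ((X ^ 2 - 1 : ℝ[X]) ^ n).Monic :=
  (monic_X_pow_sub_C (1 : ℝ) two_ne_zero).pow n

theorem X_sq_sub_one_pow_natDegree (n : ℕ) : ((X ^ 2 - 1 : ℝ[X]) ^ n).natDegree = n * 2 := by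
  rw [natDegree_pow, ← C_1, natDegree_X_pow_sub_C]

theorem natDegree_legPoly_le (n : ℕ) : (legPoly n).natDegree ≤ n := by
  refine (natDegree_C_mul_le _ _).trans ((natDegree_iterate_derivative _ _).trans ?_)
  rw [X_sq_sub_one_pow_natDegree]; omega

/-- The leading coefficient of `p̂_n`, with the denominator cleared. -/
theorem coeff_legPoly (n : ℕ) :
    (legPoly n).coeff n * n.factorial = legConst n * (2 * n).factorial := by
  have h := (X_sq_sub_one_pow_monic n).coeff_natDegree
  rw [X_sq_sub_one_pow_natDegree, mul_two] at h
  have h2 := Nat.factorial_mul_descFactorial (n := n + n) (k := n) (by omega)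
  rw [Nat.add_sub_cancel] at h2
  rw [legPoly, coeff_C_mul, coeff_iterate_derivative, h, two_mul, ← h2]
  push_cast
  simp
  ring

theorem legConst_sq (n : ℕ) :
    legConst n ^ 2 * (2 ^ (2 * n + 1) * (n.factorial : ℝ) ^ 2) = 2 * n + 1 := by
  have : (n.factorial : ℝ) ≠ 0 := by positivity
  rw [legConst, mul_pow, Real.sq_sqrt (by positivity)]
  field_simp
  ring

theorem legConst_ne_zero (n : ℕ) : legConst n ≠ 0 := by
  unfold legConst; positivity

theorem polyInt_legPoly_self (n : ℕ) : polyInt (legPoly n * legPoly n) = 1 := by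
  have h1 := polyInt_mul_legPoly n (legPoly n) (natDegree_legPoly_le n)
  have h2 := coeff_legPoly n
  have h3 := polyInt_pow n
  have h4 := legConst_sq n
  have h5 : ((-1 : ℝ) ^ n) * (-1) ^ n = 1 := by rw [← mul_pow]; simp
  rw [Nat.factorial_succ] at h3
  push_cast at h3
  have h6 : (2 * n + 1 : ℝ) ≠ 0 := by positivity
  rw [h1]
  apply mul_left_cancel₀ h6
  linear_combination ((2 * n + 1) * legConst n * (-1) ^ n * polyInt ((X ^ 2 - 1) ^ n)) * h2 +
    legConst n ^ 2 * (-1) ^ n * h3 +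
    legConst n ^ 2 * (2 ^ (2 * n + 1) * (n.factorial : ℝ) ^ 2) * h5 + h4

theorem polyInt_legPoly_of_lt {m n : ℕ} (h : m < n) : polyInt (legPoly m * legPoly n) = 0 := by
  rw [polyInt_mul_legPoly n _ ((natDegree_legPoly_le m).trans h.le),
    coeff_eq_zero_of_natDegree_lt ((natDegree_legPoly_le m).trans_lt h)]
  simp

theorem polyInt_legPoly (m n : ℕ) : polyInt (legPoly m * legPoly n) = if m = n then 1 else 0 := by
  split_ifs with h
  · rw [h, polyInt_legPoly_self]
  · rcases lt_or_gt_of_ne h with h | h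
    · exact polyInt_legPoly_of_lt h
    · rw [mul_comm]; exact polyInt_legPoly_of_lt h

/-- A polynomial of degree at most `j` orthogonal to `p̂_0, …, p̂_j` is zero: testing against `p̂_d`
with `d` its own degree shows that its leading coefficient vanishes. -/
theorem eq_zero_of_polyInt_legPoly (j : ℕ) (r : ℝ[X]) (hr : r.natDegree ≤ j)
    (h : ∀ k ≤ j, polyInt (r * legPoly k) = 0) : r = 0 := by
  have h1 := h _ hr
  rw [polyInt_mul_legPoly _ r le_rfl] at h1
  have : (r.natDegree.factorial : ℝ) ≠ 0 := by positivity
  simpa [legConst_ne_zero, this, polyInt_pow_ne_zero] using h1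

theorem legPoly_expansion (j : ℕ) (q : ℝ[X]) (hq : q.natDegree ≤ j) :
    q = ∑ k ∈ Finset.range (j + 1), C (polyInt (q * legPoly k)) * legPoly k := by
  rw [← sub_eq_zero]
  apply eq_zero_of_polyInt_legPoly j
  · refine (natDegree_sub_le _ _).trans (max_le hq (natDegree_sum_le_of_forall_le _ _ ?_))
    intro k hk
    have := Finset.mem_range.1 hk
    exact (natDegree_C_mul_le _ _).trans ((natDegree_legPoly_le k).trans (by omega))
  · intro k hk
    rw [sub_eq_add_neg, add_mul, polyInt_add, ← neg_one_mul, mul_assoc, ← C_1, ← C_neg,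
      polyInt_C_mul, Finset.sum_mul, polyInt_sum]
    simp only [mul_assoc, polyInt_C_mul, polyInt_legPoly]
    simp [Nat.lt_succ_iff.2 hk]

/-! ### The refinement equation and its Fourier transform -/

/-- `c_{j,k}` is the `k`-th Legendre coefficient of `s ↦ p̂_j((s+1)/2)`. -/
theorem alpertC_eq_s16 (j k : ℕ) :
    alpertC j k = ∫ s in (-1 : ℝ)..1, legendreHat j ((s + 1) / 2) * legendreHat k s := by
  have h := intervalIntegral.integral_comp_mul_sub (a := 0) (b := 1)
    (fun s => legendreHat j ((s + 1) / 2) * legendreHat k s) (two_ne_zero (α := ℝ)) 1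
  norm_num at h
  rw [alpertC, h]
  ring

theorem legendreHat_refinement (j : ℕ) (s : ℝ) :
    legendreHat j ((s + 1) / 2) =
      ∑ k ∈ Finset.range (j + 1), alpertC j k * legendreHat k s := by
  set q : ℝ[X] := (legPoly j).comp (C (1 / 2) * X + C (1 / 2)) with hq
  have he (s : ℝ) : q.eval s = legendreHat j ((s + 1) / 2) := by
    rw [legendreHat_eq_eval, hq, eval_comp]
    congr 1
    simp; ring
  have hdeg : q.natDegree ≤ j := by
    refine natDegree_comp_le.trans ?_
    refine (Nat.mul_le_mul (natDegree_legPoly_le j) (natDegree_linear_le)).trans (by simp)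
  have hc (k : ℕ) : polyInt (q * legPoly k) = alpertC j k := by
    rw [alpertC_eq_s16, polyInt]
    simp only [eval_mul, he, legendreHat_eq_eval k]
  have h := congrArg (eval s) (legPoly_expansion j q hdeg)
  simpa only [he, eval_finsetSum, eval_mul, eval_C, hc, ← legendreHat_eq_eval] using h

theorem continuous_legendreHat (n : ℕ) : Continuous (legendreHat n) := by
  rw [funext (legendreHat_eq_eval n)]
  exact (legPoly n).continuous

/-- The Fourier integral of `p̂_j` over the right half `[0,1]`, by the substitution `t = (s+1)/2` and
the refinement equation. -/
theorem legendreHat_half_fourier (j : ℕ) (b : ℝ) :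
    (∫ t in (0 : ℝ)..1, Complex.exp (-Complex.I * b * t) * (legendreHat j t : ℂ)) =
      (1 / 2 : ℂ) * ∑ k ∈ Finset.range (j + 1), (alpertC j k : ℂ) *
        Complex.exp (-Complex.I * b / 2) *
          ∫ s in (-1 : ℝ)..1, Complex.exp (-Complex.I * b * s / 2) * (legendreHat k s : ℂ) := by
  have h := intervalIntegral.integral_comp_mul_add (a := -1) (b := 1)
    (fun t : ℝ => Complex.exp (-Complex.I * b * t) * (legendreHat j t : ℂ))
    (one_half_pos (α := ℝ)).ne' (1 / 2)
  norm_num at h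
  have h2 : (∫ t in (0 : ℝ)..1, Complex.exp (-Complex.I * b * t) * (legendreHat j t : ℂ)) =
      (1 / 2 : ℂ) * ∫ s in (-1 : ℝ)..1, ∑ k ∈ Finset.range (j + 1), ((alpertC j k : ℂ) *
        Complex.exp (-Complex.I * b / 2)) *
          (Complex.exp (-Complex.I * b * s / 2) * (legendreHat k s : ℂ)) := by
    have h3 : (∫ s in (-1 : ℝ)..1, ∑ k ∈ Finset.range (j + 1), ((alpertC j k : ℂ) *
        Complex.exp (-Complex.I * b / 2)) *
          (Complex.exp (-Complex.I * b * s / 2) * (legendreHat k s : ℂ))) =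
        ∫ s in (-1 : ℝ)..1, Complex.exp (-(Complex.I * b * (1 / 2 * s + 1 / 2))) *
          (legendreHat j (1 / 2 * s + 1 / 2) : ℂ) := by
      congr 1 with s
      rw [show (1 / 2 * s + 1 / 2 : ℝ) = (s + 1) / 2 by ring, legendreHat_refinement,
        show -(Complex.I * b * (1 / 2 * s + 1 / 2)) =
          -Complex.I * b / 2 + -Complex.I * b * s / 2 by ring, Complex.exp_add]
      push_cast
      rw [Finset.mul_sum]
      exact Finset.sum_congr rfl fun k _ => by ring
    rw [h3, h]
    norm_num
    ring
  rw [h2, intervalIntegral.integral_finsetSum]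
  · simp only [intervalIntegral.integral_const_mul]
  · intro k _
    have := continuous_legendreHat k
    apply Continuous.intervalIntegrable
    fun_prop

/-- Reflecting the frequency multiplies the Fourier integral of `p̂_k` by `(-1)^k`, by parity. -/
theorem legendreHat_fourier_neg (k : ℕ) (a : ℝ) :
    (∫ s in (-1 : ℝ)..1, Complex.exp (-Complex.I * (-a : ℝ) * s / 2) * (legendreHat k s : ℂ)) =
      (-1) ^ k *
        ∫ s in (-1 : ℝ)..1, Complex.exp (-Complex.I * a * s / 2) * (legendreHat k s : ℂ) := by
  have h := intervalIntegral.integral_comp_neg (a := -1) (b := 1)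
    (fun s : ℝ => Complex.exp (-Complex.I * (-a : ℝ) * s / 2) * (legendreHat k s : ℂ))
  rw [neg_neg] at h
  rw [← h, ← intervalIntegral.integral_const_mul]
  congr 1 with s
  rw [legendreHat_neg]
  push_cast
  rw [show -Complex.I * -(a : ℂ) * -(s : ℂ) / 2 = -Complex.I * a * s / 2 by ring]
  ring

theorem legendreHat_fourier_two_scale (j : ℕ) (a : ℝ) :
    (∫ t in (-1:ℝ)..1, Complex.exp (-Complex.I * a * t) * (legendreHat j t : ℂ)) =
      (1 / 2 : ℂ) * ∑ k ∈ Finset.range (j + 1),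
        (alpertC j k : ℂ) *
          ((-1 : ℂ) ^ (j + k) * Complex.exp (Complex.I * a / 2) +
            Complex.exp (-Complex.I * a / 2)) *
          ∫ s in (-1:ℝ)..1, Complex.exp (-Complex.I * a * s / 2) * (legendreHat k s : ℂ) := by
  have hj := continuous_legendreHat j
  have hcont : Continuous fun t : ℝ =>
      Complex.exp (-Complex.I * a * t) * (legendreHat j t : ℂ) := by fun_prop
  -- The left half of the integral is reflected onto `[0,1]`, which turns `a` into `-a`.
  have hneg : (∫ t in (-1 : ℝ)..0, Complex.exp (-Complex.I * a * t) * (legendreHat j t : ℂ)) =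
      (-1) ^ j *
        ∫ t in (0 : ℝ)..1, Complex.exp (-Complex.I * (-a : ℝ) * t) * (legendreHat j t : ℂ) := by
    have h := intervalIntegral.integral_comp_neg (a := 0) (b := 1)
      (fun t : ℝ => Complex.exp (-Complex.I * a * t) * (legendreHat j t : ℂ))
    rw [neg_zero] at h
    rw [← h, ← intervalIntegral.integral_const_mul]
    congr 1 with t
    rw [legendreHat_neg]
    push_cast
    rw [show -Complex.I * (a : ℂ) * -(t : ℂ) = -Complex.I * -a * t by ring]
    ring
  rw [← intervalIntegral.integral_add_adjacent_intervals (hcont.intervalIntegrable (-1) 0)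
    (hcont.intervalIntegrable 0 1), hneg, legendreHat_half_fourier, legendreHat_half_fourier, mul_left_comm, ← mul_add,
    Finset.mul_sum, ← Finset.sum_add_distrib]
  congr 1
  refine Finset.sum_congr rfl fun k _ => ?_
  rw [legendreHat_fourier_neg, show -Complex.I * ((-a : ℝ) : ℂ) / 2 = Complex.I * a / 2 by push_cast; ring,
    pow_add]
  ring
end

section
/- Existence and uniqueness of the wavelet matrix: let n ≥ 1 and let C₁ be a real (n+1)×(n+1) lower triangular matrix (rows and columns indexed 0,…,n) with positive diagonal entries; define C₋₁ by (C₋₁)_{i,j} = (−1)^{i+j}(C₁)_{i,j} and assume C₋₁·C₋₁ᵀ + C₁·C₁ᵀ = 2·I. Then there exists a unique real (n+1)×(n+1) upper triangular matrix D₁ with positive diagonal entries and (D₁)_{n,n} = 1 such that, with D₋₁ defined by (D₋₁)_{i,j} = (−1)^{i+j+1}(D₁)_{i,j}, both C₋₁·D₋₁ᵀ + C₁·D₁ᵀ = 0 and D₋₁·D₋₁ᵀ + D₁·D₁ᵀ = 2·I hold. -/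
/-!
Write `c_i`, `d_i` for the rows of `C₁`, `D₁`. Entrywise, the sign twist turns the matrix equations
into conditions on dot products: `c_i ⬝ c_j = δ_ij` and `d_i ⬝ d_j = δ_ij` when `i ≡ j mod 2`,
and `c_i ⬝ d_j = 0` when `i ≢ j mod 2`.

Existence is proved for each parity class `s` separately (`exists_rows`). Replacing the rows of
`C₁` with index in `s` by unit vectors gives an invertible lower triangular matrix; the columns of
its inverse with index in `s` are orthogonal to every `c_i`, `i ∉ s`, and the `j`-th one is
supported on `[j, n]`. Gram-Schmidt in decreasing order of `j` keeps both properties and makes the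
vectors orthogonal. The normalization `(D₁)_{n,n} = 1` is then automatic, as `d_n` is a unit vector
supported on `{n}`.

For uniqueness (`rows_unique`), if `D` is a solution then for each parity class `s` the rows `c_i`,
`i ∉ s`, together with `d_j`, `j ∈ s`, form an orthonormal basis. Expanding a second solution `D'`
in it gives `D' = K * D` with `K_ij = d'_i ⬝ d_j` for `i ≡ j` and `0` otherwise (`expand`). Then
`K = D' * D⁻¹` is upper triangular; exchanging `D` and `D'`, so is `Kᵀ`. Hence `K` is diagonal, and
comparing the positive diagonals forces `K = 1`.
-/

open Matrix

/-- Entries of a product of two sign-twisted matrices: the signs depending on the summation index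
cancel. -/
lemma twisted_mul_apply {m : ℕ} (A B : Matrix (Fin m) (Fin m) ℝ) (a b : ℕ) (i j : Fin m) :
    ((Matrix.of fun i j : Fin m => (-1 : ℝ) ^ ((i : ℕ) + (j : ℕ) + a) * A i j) *
      (Matrix.of fun i j : Fin m => (-1 : ℝ) ^ ((i : ℕ) + (j : ℕ) + b) * B i j)ᵀ) i j
      = (-1 : ℝ) ^ ((i : ℕ) + (j : ℕ) + a + b) * (A i ⬝ᵥ B j) := by
  simp only [Matrix.mul_apply, Matrix.transpose_apply, Matrix.of_apply, dotProduct,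
    Finset.mul_sum]
  refine Finset.sum_congr rfl fun k _ => ?_
  have h : (-1 : ℝ) ^ (k : ℕ) * (-1 : ℝ) ^ (k : ℕ) = 1 := by
    rw [← mul_pow]; simp
  simp only [pow_add]
  linear_combination ((-1 : ℝ) ^ (i : ℕ) * (-1 : ℝ) ^ (j : ℕ) * (-1 : ℝ) ^ a * (-1 : ℝ) ^ b *
    A i k * B j k) * h

lemma neg_one_pow_add_of_iff {i j : ℕ} (h : Even i ↔ Even j) : (-1 : ℝ) ^ (i + j) = 1 :=
  (Nat.even_add.2 h).neg_one_pow

lemma neg_one_pow_add_of_not_iff {i j : ℕ} (h : ¬ (Even i ↔ Even j)) :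
    (-1 : ℝ) ^ (i + j) = -1 :=
  (Nat.not_even_iff_odd.1 fun h' => h (Nat.even_add.1 h')).neg_one_pow

/-- The equation `A₋₁ * A₋₁ᵀ + A₁ * A₁ᵀ = 2 • 1` in terms of rows; `a` is the parity shift
(`0` for `C`, `1` for `D`). -/
lemma orth_iff {m : ℕ} (A : Matrix (Fin m) (Fin m) ℝ) (a : ℕ) :
    (Matrix.of fun i j : Fin m => (-1 : ℝ) ^ ((i : ℕ) + (j : ℕ) + a) * A i j) *
        (Matrix.of fun i j : Fin m => (-1 : ℝ) ^ ((i : ℕ) + (j : ℕ) + a) * A i j)ᵀ +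
      A * Aᵀ = (2 : ℝ) • (1 : Matrix (Fin m) (Fin m) ℝ) ↔
    ∀ i j : Fin m, (Even (i : ℕ) ↔ Even (j : ℕ)) →
      A i ⬝ᵥ A j = if i = j then 1 else 0 := by
  have key : ∀ i j : Fin m, (A * Aᵀ) i j = A i ⬝ᵥ A j := fun _ _ => rfl
  have ha : (-1 : ℝ) ^ a * (-1 : ℝ) ^ a = 1 := by rw [← mul_pow]; simp
  have hs : ∀ x : ℕ, (-1 : ℝ) ^ (x + a + a) = (-1 : ℝ) ^ x := fun x => by
    rw [pow_add, pow_add, mul_assoc, ha, mul_one]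
  rw [← Matrix.ext_iff]
  refine forall_congr' fun i => forall_congr' fun j => ?_
  rw [Matrix.add_apply, twisted_mul_apply, key, hs, Matrix.smul_apply, Matrix.one_apply,
    smul_eq_mul]
  by_cases h : Even (i : ℕ) ↔ Even (j : ℕ)
  · rw [neg_one_pow_add_of_iff h]
    constructor
    · intro h1 _; linarith
    · intro h1; rw [h1 h]; ring
  · rw [neg_one_pow_add_of_not_iff h]
    have hij : i ≠ j := by rintro rfl; exact h Iff.rfl
    simp [h, hij]

/-- The equation `C₋₁ * D₋₁ᵀ + C₁ * D₁ᵀ = 0` in terms of rows. -/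
lemma cross_iff {m : ℕ} (A B : Matrix (Fin m) (Fin m) ℝ) :
    (Matrix.of fun i j : Fin m => (-1 : ℝ) ^ ((i : ℕ) + (j : ℕ)) * A i j) *
        (Matrix.of fun i j : Fin m => (-1 : ℝ) ^ ((i : ℕ) + (j : ℕ) + 1) * B i j)ᵀ +
      A * Bᵀ = 0 ↔
    ∀ i j : Fin m, ¬ (Even (i : ℕ) ↔ Even (j : ℕ)) → A i ⬝ᵥ B j = 0 := by
  have key : ∀ i j : Fin m, (A * Bᵀ) i j = A i ⬝ᵥ B j := fun _ _ => rfl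
  rw [← Matrix.ext_iff]
  refine forall_congr' fun i => forall_congr' fun j => ?_
  have := twisted_mul_apply A B 0 1 i j
  simp only [add_zero] at this
  rw [Matrix.add_apply, this, key, Matrix.zero_apply, pow_succ]
  by_cases h : Even (i : ℕ) ↔ Even (j : ℕ)
  · rw [neg_one_pow_add_of_iff h]
    simp [h]
  · rw [neg_one_pow_add_of_not_iff h]
    simp [h]

/-- Vectors orthogonal to the rows `C i`, `i ∉ s`, the `j`-th one supported on indices `≥ j`.
For `j ∈ s` they are columns of the inverse of `C` with its rows in `s` replaced by unit vectors;
for `j ∉ s` they are `0`, so that they do not affect Gram-Schmidt. -/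
lemma exists_dual_rows {m : ℕ} (C : Matrix (Fin m) (Fin m) ℝ)
    (hlow : ∀ i j, i < j → C i j = 0) (hdiag : ∀ i, 0 < C i i)
    (s : Fin m → Prop) :
    ∃ f : Fin m → Fin m → ℝ, (∀ j, s j → f j j = 1) ∧ (∀ j k, k < j → f j k = 0) ∧
      (∀ i j, ¬ s i → C i ⬝ᵥ f j = 0) := by
  classical
  let M : Matrix (Fin m) (Fin m) ℝ :=
    Matrix.of fun i j => if s i then (if i = j then 1 else 0) else C i j
  have hMlow : M.BlockTriangular OrderDual.toDual := by
    intro i j hij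
    have hij' : i < j := hij
    by_cases hs : s i <;> simp [M, hs, hij'.ne, hlow i j hij']
  have hMd : ∀ i, M i i ≠ 0 := by
    intro i
    by_cases hs : s i <;> simp [M, hs, (hdiag i).ne']
  have hdet : IsUnit M.det := by
    rw [Matrix.det_of_isLowerTriangular M hMlow]
    exact (Finset.prod_ne_zero_iff.2 fun i _ => hMd i).isUnit
  have : Invertible M := Matrix.invertibleOfIsUnitDet M hdet
  have hinv := Matrix.blockTriangular_inv_of_blockTriangular hMlow
  have hmul : M * M⁻¹ = 1 := Matrix.mul_nonsing_inv M hdet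
  refine ⟨fun j k => if s j then M⁻¹ k j else 0, ?_, ?_, ?_⟩
  · intro j hj
    have h := congrFun (congrFun hmul j) j
    simpa [Matrix.mul_apply, M, hj] using h
  · intro j k hkj
    have : M⁻¹ k j = 0 := hinv hkj
    simp [this]
  · intro i j hi
    by_cases hj : s j
    · have hne : i ≠ j := by rintro rfl; exact hi hj
      have h := congrFun (congrFun hmul i) j
      simpa [Matrix.mul_apply, M, hi, hj, hne, dotProduct] using h
    · simp [hj, dotProduct]

/-- The rows of `D` with index in a class `s`: an orthonormal family orthogonal to the rows of `C`
with index outside `s`. -/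
lemma exists_rows {m : ℕ} (C : Matrix (Fin m) (Fin m) ℝ)
    (hlow : ∀ i j, i < j → C i j = 0) (hdiag : ∀ i, 0 < C i i)
    (s : Fin m → Prop) :
    ∃ d : Fin m → Fin m → ℝ, (∀ j k, k < j → d j k = 0) ∧ (∀ j, s j → 0 < d j j) ∧
      (∀ i j, ¬ s i → C i ⬝ᵥ d j = 0) ∧
      (∀ i j, s i → s j → d i ⬝ᵥ d j = if i = j then 1 else 0) := by
  classical
  obtain ⟨f, hf1, hf2, hf3⟩ := exists_dual_rows C hlow hdiag s
  -- The order dual makes Gram-Schmidt run through the indices in decreasing order.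
  let F : (Fin m)ᵒᵈ → EuclideanSpace ℝ (Fin m) := fun j => WithLp.toLp 2 (f (OrderDual.ofDual j))
  let G : (Fin m)ᵒᵈ → EuclideanSpace ℝ (Fin m) := InnerProductSpace.gramSchmidt ℝ F
  -- Subspaces containing all the `F k`, `k ≤ j` in the dual order, contain `G j`.
  have hspan : ∀ (j : (Fin m)ᵒᵈ) (W : Submodule ℝ (EuclideanSpace ℝ (Fin m))),
      (∀ k ≤ j, F k ∈ W) → G j ∈ W := by
    intro j W hW
    have h := InnerProductSpace.gramSchmidt_mem_span ℝ F (le_refl j)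
    refine Submodule.span_le.2 ?_ h
    rintro _ ⟨k, hk, rfl⟩
    exact hW k hk
  have hsupp : ∀ j k : Fin m, k < j → G (OrderDual.toDual j) k = 0 := by
    intro j k hkj
    let W : Submodule ℝ (EuclideanSpace ℝ (Fin m)) :=
      { carrier := {x | x k = 0}
        add_mem' := by intro a b ha hb; simp_all
        zero_mem' := by simp
        smul_mem' := by intro c x hx; simp_all }
    refine hspan _ W fun l hl => ?_
    exact hf2 _ _ (lt_of_lt_of_le hkj hl)
  have horth : ∀ i j : Fin m, ¬ s i → C i ⬝ᵥ (G (OrderDual.toDual j)).ofLp = 0 := by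
    intro i j hi
    let W : Submodule ℝ (EuclideanSpace ℝ (Fin m)) :=
      { carrier := {x | C i ⬝ᵥ x.ofLp = 0}
        add_mem' := by intro a b ha hb; simp_all [dotProduct_add]
        zero_mem' := by simp
        smul_mem' := by intro c x hx; simp_all [dotProduct_smul] }
    refine hspan _ W fun l _ => ?_
    exact hf3 _ _ hi
  -- Gram-Schmidt corrects `F j` by vectors vanishing at the coordinate `j`.
  have hGd : ∀ j : Fin m, s j → G (OrderDual.toDual j) j = 1 := by
    intro j hj
    have h := InnerProductSpace.gramSchmidt_def'' ℝ F (OrderDual.toDual j)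
    have h2 := congrArg (fun x : EuclideanSpace ℝ (Fin m) => x j) h
    have hFj : F (OrderDual.toDual j) j = 1 := hf1 j hj
    simp only [PiLp.add_apply, hFj] at h2
    rw [WithLp.ofLp_sum, Finset.sum_apply, Finset.sum_eq_zero, add_zero] at h2
    · exact h2.symm
    · intro k hk
      have hk' : j < OrderDual.ofDual k := OrderDual.lt_toDual.1 (Finset.mem_Iio.1 hk)
      have := hsupp _ _ hk'
      rw [PiLp.smul_apply]
      exact mul_eq_zero_of_right _ this
  have hGn : ∀ j : Fin m, s j → 0 < ‖G (OrderDual.toDual j)‖ := by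
    intro j hj
    refine norm_pos_iff.2 fun h => ?_
    have := hGd j hj
    rw [h] at this
    simp at this
  refine ⟨fun j => ‖G (OrderDual.toDual j)‖⁻¹ • (G (OrderDual.toDual j)).ofLp, ?_, ?_, ?_, ?_⟩
  · intro j k hkj
    simp [hsupp j k hkj]
  · intro j hj
    simpa [hGd j hj] using (norm_pos_iff.1 (hGn j hj))
  · intro i j hi
    rw [dotProduct_smul, horth i j hi, smul_zero]
  · intro i j hi hj
    have hin : ∀ x y : EuclideanSpace ℝ (Fin m), x.ofLp ⬝ᵥ y.ofLp = inner ℝ x y := by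
      intro x y
      rw [EuclideanSpace.inner_eq_star_dotProduct, dotProduct_comm]
      simp
    rw [dotProduct_smul, smul_dotProduct, hin]
    split_ifs with hij
    · subst hij
      rw [real_inner_self_eq_norm_sq]
      have := (hGn i hi).ne'
      simp only [smul_eq_mul]
      field_simp
    · have : inner ℝ (G (OrderDual.toDual i)) (G (OrderDual.toDual j)) = 0 :=
        InnerProductSpace.gramSchmidt_orthogonal ℝ F (by simpa using hij)
      rw [this]; simp

/-- The conditions on `D₁` in terms of its rows, the normalization of the last entry excepted. -/
structure IsWaveletRows {m : ℕ} (C D : Matrix (Fin m) (Fin m) ℝ) : Prop where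
  upper : ∀ i j, j < i → D i j = 0
  diag : ∀ i, 0 < D i i
  cross : ∀ i j : Fin m, ¬ (Even (i : ℕ) ↔ Even (j : ℕ)) → C i ⬝ᵥ D j = 0
  orth : ∀ i j : Fin m, (Even (i : ℕ) ↔ Even (j : ℕ)) → D i ⬝ᵥ D j = if i = j then 1 else 0

/-- The matrix of dot products of rows of `D'` and `D`, restricted to pairs of equal parity. -/
noncomputable def transition {m : ℕ} (D' D : Matrix (Fin m) (Fin m) ℝ) :
    Matrix (Fin m) (Fin m) ℝ :=
  Matrix.of fun i j => if (Even (i : ℕ) ↔ Even (j : ℕ)) then D' i ⬝ᵥ D j else 0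

lemma transition_transpose {m : ℕ} (D' D : Matrix (Fin m) (Fin m) ℝ) :
    (transition D' D)ᵀ = transition D D' := by
  ext i j
  simp only [transition, Matrix.transpose_apply, Matrix.of_apply, dotProduct_comm (D' j),
    iff_comm (a := Even (j : ℕ))]

lemma expand {m : ℕ} {C D D' : Matrix (Fin m) (Fin m) ℝ}
    (hC : ∀ i j : Fin m, (Even (i : ℕ) ↔ Even (j : ℕ)) →
      C i ⬝ᵥ C j = if i = j then 1 else 0)
    (hD : IsWaveletRows C D) (hD' : IsWaveletRows C D') : D' = transition D' D * D := by
  classical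
  ext i a
  -- The orthogonal matrix adapted to the parity class of `i`.
  let M : Matrix (Fin m) (Fin m) ℝ :=
    Matrix.of fun k => if (Even (i : ℕ) ↔ Even (k : ℕ)) then D k else C k
  have hMD : ∀ k : Fin m, (Even (i : ℕ) ↔ Even (k : ℕ)) → M k = D k := fun _ h => if_pos h
  have hMC : ∀ k : Fin m, ¬ (Even (i : ℕ) ↔ Even (k : ℕ)) → M k = C k := fun _ h => if_neg h
  have hM : M * Mᵀ = 1 := by
    ext k l
    have e : (M * Mᵀ) k l = M k ⬝ᵥ M l := rfl
    rw [e, Matrix.one_apply]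
    by_cases hk : Even (i : ℕ) ↔ Even (k : ℕ) <;> by_cases hl : Even (i : ℕ) ↔ Even (l : ℕ)
    · rw [hMD k hk, hMD l hl]
      exact hD.orth k l (hk.symm.trans hl)
    · have hkl : ¬ (Even (l : ℕ) ↔ Even (k : ℕ)) := fun h => hl (hk.trans h.symm)
      rw [hMD k hk, hMC l hl, dotProduct_comm, hD.cross l k hkl,
        if_neg (by rintro rfl; exact hl hk)]
    · have hkl : ¬ (Even (k : ℕ) ↔ Even (l : ℕ)) := fun h => hk (hl.trans h.symm)
      rw [hMC k hk, hMD l hl, hD.cross k l hkl, if_neg (by rintro rfl; exact hk hl)]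
    · rw [hMC k hk, hMC l hl]
      exact hC k l (by tauto)
  have hM' : Mᵀ * M = 1 := mul_eq_one_comm.1 hM
  have hv : Mᵀ *ᵥ (M *ᵥ D' i) = D' i := by
    rw [Matrix.mulVec_mulVec, hM', Matrix.one_mulVec]
  have hva := congrFun hv a
  rw [← hva, Matrix.mul_apply]
  change ∑ k, Mᵀ a k * (M *ᵥ D' i) k = _
  refine Finset.sum_congr rfl fun k _ => ?_
  have e : (M *ᵥ D' i) k = M k ⬝ᵥ D' i := rfl
  rw [e, Matrix.transpose_apply]
  by_cases hk : Even (i : ℕ) ↔ Even (k : ℕ)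
  · simp only [hMD k hk, transition, Matrix.of_apply, if_pos hk, dotProduct_comm (D k)]
    ring
  · have := hD'.cross k i (fun h => hk h.symm)
    simp only [hMC k hk, transition, Matrix.of_apply, if_neg hk, this]
    ring

lemma transition_upper {m : ℕ} {C D D' : Matrix (Fin m) (Fin m) ℝ}
    (hC : ∀ i j : Fin m, (Even (i : ℕ) ↔ Even (j : ℕ)) →
      C i ⬝ᵥ C j = if i = j then 1 else 0)
    (hD : IsWaveletRows C D) (hD' : IsWaveletRows C D') (i j : Fin m) (hij : j < i) :
    transition D' D i j = 0 := by
  have hDt : D.BlockTriangular id := fun i j h => hD.upper i j h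
  have hDt' : D'.BlockTriangular id := fun i j h => hD'.upper i j h
  have hdet : IsUnit D.det := by
    rw [Matrix.det_of_isUpperTriangular hDt]
    exact (Finset.prod_ne_zero_iff.2 fun i _ => (hD.diag i).ne').isUnit
  have : Invertible D := Matrix.invertibleOfIsUnitDet D hdet
  have hK : transition D' D = D' * D⁻¹ := by
    conv_rhs => rw [expand hC hD hD']
    rw [Matrix.mul_nonsing_inv_cancel_right _ _ hdet]
  rw [hK]
  exact (hDt'.mul (Matrix.blockTriangular_inv_of_blockTriangular hDt)) hij

lemma rows_unique {m : ℕ} {C D D' : Matrix (Fin m) (Fin m) ℝ}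
    (hC : ∀ i j : Fin m, (Even (i : ℕ) ↔ Even (j : ℕ)) →
      C i ⬝ᵥ C j = if i = j then 1 else 0)
    (hD : IsWaveletRows C D) (hD' : IsWaveletRows C D') : D' = D := by
  have hoff : ∀ i j, i ≠ j → transition D' D i j = 0 := by
    intro i j hij
    rcases lt_or_gt_of_ne hij with h | h
    · rw [← transition_transpose D D', Matrix.transpose_apply]
      exact transition_upper hC hD' hD j i h
    · exact transition_upper hC hD hD' i j h
  have hrow : ∀ i a, D' i a = transition D' D i i * D i a := by
    intro i a
    conv_lhs => rw [expand hC hD hD', Matrix.mul_apply]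
    exact Finset.sum_eq_single i (fun k _ hk => by rw [hoff i k hk.symm, zero_mul]) (by simp)
  have hrow' : ∀ i a, D i a = transition D' D i i * D' i a := by
    intro i a
    conv_lhs => rw [expand hC hD' hD, Matrix.mul_apply]
    rw [← transition_transpose D' D]
    exact Finset.sum_eq_single i
      (fun k _ hk => by rw [Matrix.transpose_apply, hoff k i hk, zero_mul]) (by simp)
  ext i a
  have h1 := hrow i i
  have h2 := hrow' i i
  have p := hD.diag i
  have p' := hD'.diag i
  have hpos : 0 < transition D' D i i := by
    rw [h1] at p'
    exact pos_of_mul_pos_left p' p.le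
  have hsq : transition D' D i i * transition D' D i i = 1 := by
    rw [h1, ← mul_assoc] at h2
    exact mul_right_cancel₀ p.ne' (by rw [one_mul]; exact h2.symm)
  have hone : transition D' D i i = 1 := by nlinarith
  rw [hrow i a, hone, one_mul]

lemma rows_exist {m : ℕ} (C : Matrix (Fin m) (Fin m) ℝ)
    (hlow : ∀ i j, i < j → C i j = 0) (hdiag : ∀ i, 0 < C i i) :
    ∃ D, IsWaveletRows C D := by
  choose d h1 h2 h3 h4 using fun P : Prop =>
    exists_rows C hlow hdiag (fun j => Even (j : ℕ) ↔ P)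
  refine ⟨Matrix.of fun i => d (Even (i : ℕ)) i, ?_, ?_, ?_, ?_⟩
  · intro i j hij
    exact h1 _ i j hij
  · intro i
    exact h2 _ i Iff.rfl
  · intro i j hij
    exact h3 _ i j hij
  · intro i j hij
    have h := h4 (Even (i : ℕ)) i j Iff.rfl hij.symm
    have e : Even (i : ℕ) = Even (j : ℕ) := propext hij
    change d (Even (i : ℕ)) i ⬝ᵥ d (Even (j : ℕ)) j = _
    rw [← e]
    exact h

theorem wavelet_matrix_existsUnique (n : ℕ) (hn : 1 ≤ n)
    (C1 : Matrix (Fin (n + 1)) (Fin (n + 1)) ℝ)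
    (hC_low : ∀ i j : Fin (n + 1), i < j → C1 i j = 0)
    (hC_diag : ∀ i : Fin (n + 1), 0 < C1 i i)
    (hC_orth :
      (Matrix.of fun i j : Fin (n + 1) => (-1 : ℝ) ^ ((i : ℕ) + (j : ℕ)) * C1 i j) *
          (Matrix.of fun i j : Fin (n + 1) => (-1 : ℝ) ^ ((i : ℕ) + (j : ℕ)) * C1 i j)ᵀ +
        C1 * C1ᵀ = (2 : ℝ) • (1 : Matrix (Fin (n + 1)) (Fin (n + 1)) ℝ)) :
    ∃! D1 : Matrix (Fin (n + 1)) (Fin (n + 1)) ℝ,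
      (∀ i j : Fin (n + 1), j < i → D1 i j = 0) ∧
      (∀ i : Fin (n + 1), 0 < D1 i i) ∧
      D1 (Fin.last n) (Fin.last n) = 1 ∧
      (Matrix.of fun i j : Fin (n + 1) => (-1 : ℝ) ^ ((i : ℕ) + (j : ℕ)) * C1 i j) *
            (Matrix.of fun i j : Fin (n + 1) =>
              (-1 : ℝ) ^ ((i : ℕ) + (j : ℕ) + 1) * D1 i j)ᵀ +
          C1 * D1ᵀ = 0 ∧
      (Matrix.of fun i j : Fin (n + 1) => (-1 : ℝ) ^ ((i : ℕ) + (j : ℕ) + 1) * D1 i j) *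
            (Matrix.of fun i j : Fin (n + 1) =>
              (-1 : ℝ) ^ ((i : ℕ) + (j : ℕ) + 1) * D1 i j)ᵀ +
          D1 * D1ᵀ = (2 : ℝ) • (1 : Matrix (Fin (n + 1)) (Fin (n + 1)) ℝ) := by
  have hC := (orth_iff C1 0).1 hC_orth
  have toRows : ∀ D : Matrix (Fin (n + 1)) (Fin (n + 1)) ℝ, _ → _ → _ → _ → IsWaveletRows C1 D :=
    fun D hu hd hc ho => ⟨hu, hd, (cross_iff C1 D).1 hc, (orth_iff D 1).1 ho⟩
  obtain ⟨D, hD⟩ := rows_exist C1 hC_low hC_diag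
  refine ⟨D, ⟨hD.upper, hD.diag, ?_, (cross_iff C1 D).2 hD.cross, (orth_iff D 1).2 hD.orth⟩, ?_⟩
  · have h := hD.orth (Fin.last n) (Fin.last n) Iff.rfl
    have hp := hD.diag (Fin.last n)
    rw [if_pos rfl, dotProduct, Finset.sum_eq_single (Fin.last n)
      (fun k _ hk => by rw [hD.upper _ k (Fin.lt_last_iff_ne_last.2 hk), zero_mul])
      (by simp)] at h
    nlinarith
  · rintro D' ⟨hu, hd, -, hc, ho⟩
    exact rows_unique hC hD (toRows D' hu hd hc ho)
end
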